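/- arXiv:2108.13849 — 2 statements merged into one kernel-verified Lean document; each statement's English description precedes it below -/
import Mathlib

section
/- Let q = ux + 2 + 2g, z = q² g⁻¹, s = xv + uy + (−(1/2)ux + g − 1)ζ − 2(1 + g), ω = q g⁻¹ s and θ = s² g⁻¹, all elements of D. Then s is a normal element of D (sD = Ds), the elements ω and θ are central in D, and zθ = ω². -/
open FreeAlgebra

/-- Generators of the double of the Jordan plane. -/
inductive JGen : Type
  | u | v | zeta | g | ginv | x | y

variable (k : Type) [Field k] [IsAlgClosed k] [CharZero k]

/-- The defining relations of the double of the Jordan plane. -/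
inductive JRel : FreeAlgebra k JGen → FreeAlgebra k JGen → Prop
  | gginv : JRel (ι k .g * ι k .ginv) 1
  | ginvg : JRel (ι k .ginv * ι k .g) 1
  | zg : JRel (ι k .zeta * ι k .g) (ι k .g * ι k .zeta)
  | gx : JRel (ι k .g * ι k .x) (ι k .x * ι k .g)
  | gy : JRel (ι k .g * ι k .y) (ι k .y * ι k .g + ι k .x * ι k .g)
  | zy : JRel (ι k .zeta * ι k .y) (ι k .y * ι k .zeta + ι k .y)
  | zx : JRel (ι k .zeta * ι k .x) (ι k .x * ι k .zeta + ι k .x)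
  | ug : JRel (ι k .u * ι k .g) (ι k .g * ι k .u)
  | vg : JRel (ι k .v * ι k .g) (ι k .g * ι k .v + ι k .g * ι k .u)
  | vz : JRel (ι k .v * ι k .zeta) (ι k .zeta * ι k .v + ι k .v)
  | uz : JRel (ι k .u * ι k .zeta) (ι k .zeta * ι k .u + ι k .u)
  | yx : JRel (ι k .y * ι k .x) (ι k .x * ι k .y - (1/2 : k) • (ι k .x * ι k .x))
  | vu : JRel (ι k .v * ι k .u) (ι k .u * ι k .v - (1/2 : k) • (ι k .u * ι k .u))
  | ux : JRel (ι k .u * ι k .x) (ι k .x * ι k .u)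
  | vx : JRel (ι k .v * ι k .x) (ι k .x * ι k .v + (1 - ι k .g) + ι k .x * ι k .u)
  | uy : JRel (ι k .u * ι k .y) (ι k .y * ι k .u + (1 - ι k .g))
  | vy : JRel (ι k .v * ι k .y) (ι k .y * ι k .v - ι k .g * ι k .zeta + ι k .y * ι k .u)

/-- The double of the Jordan plane, as the presented algebra. -/
def D : Type := RingQuot (JRel k)

noncomputable instance : Ring (D k) := inferInstanceAs (Ring (RingQuot (JRel k)))
noncomputable instance : Algebra k (D k) := inferInstanceAs (Algebra k (RingQuot (JRel k)))

/-- The canonical projection from the free algebra onto `D`. -/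
noncomputable def Dmk : FreeAlgebra k JGen →ₐ[k] D k := RingQuot.mkAlgHom k (JRel k)

noncomputable def DU : D k := Dmk k (ι k .u)
noncomputable def DV : D k := Dmk k (ι k .v)
noncomputable def DZ : D k := Dmk k (ι k .zeta)
noncomputable def DG : D k := Dmk k (ι k .g)
noncomputable def DGinv : D k := Dmk k (ι k .ginv)
noncomputable def DX : D k := Dmk k (ι k .x)
noncomputable def DY : D k := Dmk k (ι k .y)

set_option synthInstance.maxHeartbeats 1000000
set_option maxHeartbeats 2000000

/-!
Let `σ_t` be the automorphism of `D` with `v ↦ v + t u` and `y ↦ y - t x` that fixes the other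
generators; then `σ_t σ_t' = σ_(t + t')`. For all `d` one has `g⁻¹ d = σ_1(d) g⁻¹`,
`q d = σ_(-1/2)(d) q` and `s d = σ_(-1/2)(d) s`. The last identity makes `s` normal, and since the
parameters add up to `0` along `q g⁻¹ s` and `s² g⁻¹`, both products are central. Moreover `q` and
`s` are fixed by every `σ_t`, so `q`, `g` and `s` commute with each other, whence `z θ = ω²`.
-/

namespace JordanDouble

theorem mul_mul_of_mul_eq {M : Type*} [Semigroup M] {a b c : M} (h : a * b = c) (t : M) :
    a * (b * t) = c * t := by
  rw [← mul_assoc, h]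

theorem setOf_mul_left_eq_setOf_mul_right {M : Type*} [Mul M] {a : M} {σ : M → M}
    (hσ : Function.Surjective σ) (ha : ∀ d, SemiconjBy a d (σ d)) :
    {w | ∃ d, w = a * d} = {w | ∃ d, w = d * a} := by
  ext w
  constructor
  · rintro ⟨d, rfl⟩
    exact ⟨σ d, ha d⟩
  · rintro ⟨e, rfl⟩
    obtain ⟨d, rfl⟩ := hσ e
    exact ⟨d, (ha d).symm⟩

theorem sq_mul_mul_sq_mul_eq_sq {M : Type*} [Monoid M] {a b c : M} (hab : Commute a b)
    (hac : Commute a c) (hbc : Commute b c) : a ^ 2 * b * (c ^ 2 * b) = (a * b * c) ^ 2 := by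
  rw [(hac.mul_left hbc).mul_pow, hab.mul_pow, ← (hbc.pow_right 2).eq, sq b]
  simp only [mul_assoc]

theorem semiconjBy_of_forall_semiconjBy_ι {R X A : Type*} [CommSemiring R] [Semiring A]
    [Algebra R A] {φ ψ : FreeAlgebra R X →ₐ[R] A} {a : A}
    (h : ∀ i, SemiconjBy a (φ (ι R i)) (ψ (ι R i))) (p : FreeAlgebra R X) :
    SemiconjBy a (φ p) (ψ p) := by
  induction p using FreeAlgebra.induction with
  | grade0 r =>
    rw [AlgHom.commutes, AlgHom.commutes]
    exact Algebra.commute_algebraMap_right r a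
  | grade1 i => exact h i
  | mul p p' hp hp' => simpa only [map_mul] using hp.mul_right hp'
  | add p p' hp hp' => simpa only [map_add] using hp.add_right hp'

section Relations

variable {F : Type} [Field F]

theorem Dmk_eq_of_rel {a b : FreeAlgebra F JGen} (h : JRel F a b) : Dmk F a = Dmk F b :=
  RingQuot.mkAlgHom_rel F h

variable (F)

theorem DG_mul_DGinv : DG F * DGinv F = 1 := by
  simpa only [DG, DGinv, map_mul, map_one] using Dmk_eq_of_rel .gginv

theorem DGinv_mul_DG : DGinv F * DG F = 1 := by
  simpa only [DGinv, DG, map_mul, map_one] using Dmk_eq_of_rel .ginvg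

theorem DZ_mul_DG : DZ F * DG F = DG F * DZ F := by
  simpa only [DZ, DG, map_mul] using Dmk_eq_of_rel .zg

theorem DG_mul_DX : DG F * DX F = DX F * DG F := by
  simpa only [DG, DX, map_mul] using Dmk_eq_of_rel .gx

theorem DG_mul_DY : DG F * DY F = DY F * DG F + DX F * DG F := by
  simpa only [DG, DY, DX, map_mul, map_add] using Dmk_eq_of_rel .gy

theorem DZ_mul_DY : DZ F * DY F = DY F * DZ F + DY F := by
  simpa only [DZ, DY, map_mul, map_add] using Dmk_eq_of_rel .zy

theorem DZ_mul_DX : DZ F * DX F = DX F * DZ F + DX F := by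
  simpa only [DZ, DX, map_mul, map_add] using Dmk_eq_of_rel .zx

theorem DU_mul_DG : DU F * DG F = DG F * DU F := by
  simpa only [DU, DG, map_mul] using Dmk_eq_of_rel .ug

theorem DV_mul_DG : DV F * DG F = DG F * DV F + DG F * DU F := by
  simpa only [DV, DG, DU, map_mul, map_add] using Dmk_eq_of_rel .vg

theorem DV_mul_DZ : DV F * DZ F = DZ F * DV F + DV F := by
  simpa only [DV, DZ, map_mul, map_add] using Dmk_eq_of_rel .vz

theorem DU_mul_DZ : DU F * DZ F = DZ F * DU F + DU F := by
  simpa only [DU, DZ, map_mul, map_add] using Dmk_eq_of_rel .uz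

theorem DY_mul_DX : DY F * DX F = DX F * DY F - (1 / 2 : F) • (DX F * DX F) := by
  simpa only [DY, DX, map_mul, map_sub, map_smul] using Dmk_eq_of_rel .yx

theorem DV_mul_DU : DV F * DU F = DU F * DV F - (1 / 2 : F) • (DU F * DU F) := by
  simpa only [DV, DU, map_mul, map_sub, map_smul] using Dmk_eq_of_rel .vu

theorem DU_mul_DX : DU F * DX F = DX F * DU F := by
  simpa only [DU, DX, map_mul] using Dmk_eq_of_rel .ux

theorem DV_mul_DX : DV F * DX F = DX F * DV F + (1 - DG F) + DX F * DU F := by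
  simpa only [DV, DX, DG, DU, map_mul, map_add, map_sub, map_one] using Dmk_eq_of_rel .vx

theorem DU_mul_DY : DU F * DY F = DY F * DU F + (1 - DG F) := by
  simpa only [DU, DY, DG, map_mul, map_add, map_sub, map_one] using Dmk_eq_of_rel .uy

theorem DV_mul_DY : DV F * DY F = DY F * DV F - DG F * DZ F + DY F * DU F := by
  simpa only [DV, DY, DG, DZ, DU, map_mul, map_add, map_sub] using Dmk_eq_of_rel .vy

end Relations

section Shear

variable {F : Type} [Field F]

/-- The images of the generators under `shear t`. -/
noncomputable def shearGen (t : F) : JGen → D F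
  | .u => DU F
  | .v => DV F + t • DU F
  | .zeta => DZ F
  | .g => DG F
  | .ginv => DGinv F
  | .x => DX F
  | .y => DY F - t • DX F

theorem lift_shearGen_eq_of_rel (t : F) {a b : FreeAlgebra F JGen} (h : JRel F a b) :
    FreeAlgebra.lift F (shearGen t) a = FreeAlgebra.lift F (shearGen t) b := by
  cases h <;>
  simp only [map_mul, map_add, map_sub, map_one, map_smul, FreeAlgebra.lift_ι_apply, shearGen,
    mul_add, add_mul, mul_sub, sub_mul, smul_mul_assoc, mul_smul_comm,
    DG_mul_DGinv, DGinv_mul_DG, DZ_mul_DG, DG_mul_DX, DG_mul_DY, DZ_mul_DY, DZ_mul_DX, DU_mul_DG,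
    DV_mul_DG, DV_mul_DZ, DU_mul_DZ, DY_mul_DX, DV_mul_DU, DU_mul_DX, DV_mul_DX, DU_mul_DY,
    DV_mul_DY] <;>
  module

/-- The one-parameter group `t ↦ shear t` of automorphisms of `D` given by `v ↦ v + t u` and
`y ↦ y - t x`, the other generators being fixed. -/
noncomputable def shear (t : F) : D F →ₐ[F] D F :=
  RingQuot.liftAlgHom F ⟨FreeAlgebra.lift F (shearGen t), fun _ _ => lift_shearGen_eq_of_rel t⟩

theorem shear_Dmk_ι (t : F) (i : JGen) : shear t (Dmk F (ι F i)) = shearGen t i :=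
  (RingQuot.liftAlgHom_mkAlgHom_apply ..).trans (FreeAlgebra.lift_ι_apply ..)

theorem shear_DU (t : F) : shear t (DU F) = DU F := shear_Dmk_ι t .u

theorem shear_DV (t : F) : shear t (DV F) = DV F + t • DU F := shear_Dmk_ι t .v

theorem shear_DZ (t : F) : shear t (DZ F) = DZ F := shear_Dmk_ι t .zeta

theorem shear_DG (t : F) : shear t (DG F) = DG F := shear_Dmk_ι t .g

theorem shear_DGinv (t : F) : shear t (DGinv F) = DGinv F := shear_Dmk_ι t .ginv

theorem shear_DX (t : F) : shear t (DX F) = DX F := shear_Dmk_ι t .x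

theorem shear_DY (t : F) : shear t (DY F) = DY F - t • DX F := shear_Dmk_ι t .y

theorem algHom_ext {A : Type*} [Semiring A] [Algebra F A] {φ ψ : D F →ₐ[F] A}
    (h : ∀ i, φ (Dmk F (ι F i)) = ψ (Dmk F (ι F i))) : φ = ψ :=
  RingQuot.ringQuot_ext' F φ ψ (FreeAlgebra.hom_ext (funext h))

theorem shear_zero : shear (0 : F) = AlgHom.id F (D F) := by
  refine algHom_ext fun i => ?_
  rw [shear_Dmk_ι]
  cases i <;> simp [shearGen, DU, DV, DZ, DG, DGinv, DX, DY]

theorem shear_comp_shear (t t' : F) : (shear t).comp (shear t') = shear (t + t') := by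
  refine algHom_ext fun i => ?_
  rw [AlgHom.comp_apply, shear_Dmk_ι, shear_Dmk_ι]
  cases i <;>
  simp only [shearGen, map_add, map_sub, map_smul, shear_DU, shear_DV, shear_DZ, shear_DG,
    shear_DGinv, shear_DX, shear_DY] <;>
  module

theorem shear_shear_neg (t : F) (d : D F) : shear t (shear (-t) d) = d := by
  rw [← AlgHom.comp_apply, shear_comp_shear, add_neg_cancel, shear_zero, AlgHom.id_apply]

theorem shear_surjective (t : F) : Function.Surjective (shear t) :=
  fun d => ⟨shear (-t) d, shear_shear_neg t d⟩

end Shear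

section ImplementsShear

variable {F : Type} [Field F]

/-- `a * d = shear t d * a` for all `d`: the element `a` acts on `D` like conjugation by an element
inducing the automorphism `shear t`. -/
def ImplementsShear (t : F) (a : D F) : Prop := ∀ d, SemiconjBy a d (shear t d)

variable (F) in
/-- The generator `g` as a unit of `D`. -/
noncomputable def gUnit : (D F)ˣ := ⟨DG F, DGinv F, DG_mul_DGinv F, DGinv_mul_DG F⟩

theorem ImplementsShear.of_generators {t : F} {a : D F} (hu : a * DU F = DU F * a)
    (hv : a * DV F = (DV F + t • DU F) * a) (hz : a * DZ F = DZ F * a) (hg : a * DG F = DG F * a)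
    (hx : a * DX F = DX F * a) (hy : a * DY F = (DY F - t • DX F) * a) :
    ImplementsShear t a := by
  intro d
  obtain ⟨p, rfl⟩ : ∃ p, Dmk F p = d := RingQuot.mkAlgHom_surjective F (JRel F) d
  refine semiconjBy_of_forall_semiconjBy_ι (ψ := (shear t).comp (Dmk F)) (fun i => ?_) p
  rw [AlgHom.comp_apply, shear_Dmk_ι]
  cases i with
  | u => exact hu
  | v => exact hv
  | zeta => exact hz
  | g => exact hg
  | ginv => exact Commute.units_inv_right (u := gUnit F) hg
  | x => exact hx
  | y => exact hy

theorem ImplementsShear.mul {t t' : F} {a b : D F} (ha : ImplementsShear t a)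
    (hb : ImplementsShear t' b) : ImplementsShear (t + t') (a * b) := by
  intro d
  rw [← shear_comp_shear]
  exact (ha _).mul_left (hb d)

theorem ImplementsShear.units_inv {t : F} {a : (D F)ˣ} (ha : ImplementsShear t (a : D F)) :
    ImplementsShear (-t) (↑a⁻¹ : D F) := by
  intro d
  simpa only [shear_shear_neg] using (ha (shear (-t) d)).units_inv_symm_left

theorem ImplementsShear.commute_of_shear_eq {t : F} {a d : D F} (ha : ImplementsShear t a)
    (hd : shear t d = d) : Commute a d := by
  have had := ha d
  rwa [hd] at had

theorem ImplementsShear.commute {a : D F} (ha : ImplementsShear (0 : F) a) (d : D F) :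
    Commute a d :=
  ha.commute_of_shear_eq (by rw [shear_zero, AlgHom.id_apply])

end ImplementsShear

section NormalElements

variable (F : Type) [Field F]

theorem implementsShear_DG : ImplementsShear (-1 : F) (DG F) := by
  apply ImplementsShear.of_generators <;>
  simp only [neg_smul, one_smul, add_mul, sub_mul, neg_mul, DG_mul_DX, DG_mul_DY, DZ_mul_DG,
    DU_mul_DG, DV_mul_DG] <;>
  abel

theorem implementsShear_DGinv : ImplementsShear (1 : F) (DGinv F) := by
  have h := ImplementsShear.units_inv (a := gUnit F) (implementsShear_DG F)
  rwa [neg_neg] at h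

/-- The element `q = ux + 2 + 2g`. -/
noncomputable def qElt : D F := DU F * DX F + 2 + 2 * DG F

/-- The element `s = xv + uy + (-(1/2)ux + g - 1)ζ - 2(1 + g)`. -/
noncomputable def sElt : D F :=
  DX F * DV F + DU F * DY F + (-((1 / 2 : F) • (DU F * DX F)) + DG F - 1) * DZ F - 2 * (1 + DG F)

variable {F} in
theorem shear_qElt (t : F) : shear t (qElt F) = qElt F := by
  simp only [qElt, map_add, map_mul, map_ofNat, shear_DU, shear_DX, shear_DG]

variable {F} in
theorem shear_sElt (t : F) : shear t (sElt F) = sElt F := by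
  simp only [sElt, map_add, map_sub, map_neg, map_smul, map_mul, map_one, map_ofNat, shear_DU,
    shear_DV, shear_DZ, shear_DX, shear_DY, shear_DG, mul_add, mul_sub, mul_smul_comm, DU_mul_DX]
  abel

variable [NeZero (2 : F)]

theorem implementsShear_qElt : ImplementsShear (-(1 / 2) : F) (qElt F) := by
  apply ImplementsShear.of_generators <;>
  simp only [qElt, two_mul, mul_two, add_mul, sub_mul, mul_add, mul_sub, smul_mul_assoc,
    mul_smul_comm, mul_assoc, mul_one, one_mul,
    DZ_mul_DG, DG_mul_DX, DG_mul_DY, DU_mul_DG, DV_mul_DG, DU_mul_DZ, DV_mul_DU, DU_mul_DX,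
    DU_mul_DY, mul_mul_of_mul_eq (DG_mul_DX F), mul_mul_of_mul_eq (DZ_mul_DX F),
    mul_mul_of_mul_eq (DY_mul_DX F), mul_mul_of_mul_eq (DU_mul_DX F),
    mul_mul_of_mul_eq (DV_mul_DX F)] <;>
  match_scalars <;> field_simp <;> ring

-- The relations, with their reassociated forms, rewrite every product into a combination of
-- monomials ordered as `x, y, g, ζ, u, v`, so that only coefficients remain to be compared.
theorem implementsShear_sElt : ImplementsShear (-(1 / 2) : F) (sElt F) := by
  apply ImplementsShear.of_generators <;>
  simp only [sElt, two_mul, mul_two, add_mul, sub_mul, neg_mul, mul_add, mul_sub, mul_neg,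
    smul_mul_assoc, mul_smul_comm, smul_add, smul_sub, mul_assoc, mul_one, one_mul,
    DZ_mul_DG, DG_mul_DX, DG_mul_DY, DZ_mul_DY, DZ_mul_DX, DU_mul_DG, DV_mul_DG, DV_mul_DZ,
    DU_mul_DZ, DV_mul_DU, DU_mul_DX, DV_mul_DX, DU_mul_DY, DV_mul_DY,
    mul_mul_of_mul_eq (DZ_mul_DG F), mul_mul_of_mul_eq (DG_mul_DX F),
    mul_mul_of_mul_eq (DG_mul_DY F), mul_mul_of_mul_eq (DZ_mul_DY F),
    mul_mul_of_mul_eq (DZ_mul_DX F), mul_mul_of_mul_eq (DU_mul_DG F),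
    mul_mul_of_mul_eq (DV_mul_DG F), mul_mul_of_mul_eq (DV_mul_DZ F),
    mul_mul_of_mul_eq (DU_mul_DZ F), mul_mul_of_mul_eq (DY_mul_DX F),
    mul_mul_of_mul_eq (DU_mul_DX F), mul_mul_of_mul_eq (DV_mul_DX F),
    mul_mul_of_mul_eq (DU_mul_DY F), mul_mul_of_mul_eq (DV_mul_DY F)] <;>
  match_scalars <;> field_simp <;> ring

theorem implementsShear_omega : ImplementsShear (0 : F) (qElt F * DGinv F * sElt F) := by
  have h := ((implementsShear_qElt F).mul (implementsShear_DGinv F)).mul (implementsShear_sElt F)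
  rwa [neg_add_eq_sub, sub_half, add_neg_cancel] at h

theorem implementsShear_theta : ImplementsShear (0 : F) (sElt F ^ 2 * DGinv F) := by
  have h := ((implementsShear_sElt F).mul (implementsShear_sElt F)).mul (implementsShear_DGinv F)
  rwa [← neg_add, add_halves, neg_add_cancel, ← sq] at h

theorem z_mul_theta_eq_omega_sq :
    qElt F ^ 2 * DGinv F * (sElt F ^ 2 * DGinv F) = (qElt F * DGinv F * sElt F) ^ 2 :=
  sq_mul_mul_sq_mul_eq_sq
    ((implementsShear_DGinv F).commute_of_shear_eq (shear_qElt 1)).symm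
    ((implementsShear_qElt F).commute_of_shear_eq (shear_sElt _))
    ((implementsShear_DGinv F).commute_of_shear_eq (shear_sElt 1))

end NormalElements

end JordanDouble

open JordanDouble in
theorem s_normal_omega_theta_central_general (F : Type) [Field F] [NeZero (2 : F)] :
    letI q : D F := DU F * DX F + 2 + 2 * DG F
    letI z : D F := q ^ 2 * DGinv F
    letI s : D F := DX F * DV F + DU F * DY F +
      (-((1/2 : F) • (DU F * DX F)) + DG F - 1) * DZ F - 2 * (1 + DG F)
    letI ω : D F := q * DGinv F * s
    letI θ : D F := s ^ 2 * DGinv F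
    {w : D F | ∃ d : D F, w = s * d} = {w : D F | ∃ d : D F, w = d * s} ∧
    (∀ d : D F, ω * d = d * ω) ∧
    (∀ d : D F, θ * d = d * θ) ∧
    z * θ = ω ^ 2 :=
  ⟨setOf_mul_left_eq_setOf_mul_right (shear_surjective _) (implementsShear_sElt F),
    (implementsShear_omega F).commute, (implementsShear_theta F).commute,
    z_mul_theta_eq_omega_sq F⟩

/-- with `q = ux + 2 + 2g`, `z = q²g⁻¹`, `s = xv + uy + (−(1/2)ux + g − 1)ζ −
2(1+g)`, `ω = qg⁻¹s` and `θ = s²g⁻¹`, the element `s` is normal in `D` (`sD = Ds`), the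
elements `ω` and `θ` are central in `D`, and `zθ = ω²`. -/
theorem s_normal_omega_theta_central :
    letI q : D k := DU k * DX k + 2 + 2 * DG k
    letI z : D k := q ^ 2 * DGinv k
    letI s : D k := DX k * DV k + DU k * DY k +
      (-((1/2 : k) • (DU k * DX k)) + DG k - 1) * DZ k - 2 * (1 + DG k)
    letI ω : D k := q * DGinv k * s
    letI θ : D k := s ^ 2 * DGinv k
    {w : D k | ∃ d : D k, w = s * d} = {w : D k | ∃ d : D k, w = d * s} ∧
    (∀ d : D k, ω * d = d * ω) ∧
    (∀ d : D k, θ * d = d * θ) ∧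
    z * θ = ω ^ 2 :=
  s_normal_omega_theta_central_general k
end

section
/- The algebra D is a domain (it has no zero divisors) and is both left and right noetherian. -/
open FreeAlgebra

variable (k : Type) [Field k] [IsAlgClosed k] [CharZero k]

set_option synthInstance.maxHeartbeats 1000000
set_option maxHeartbeats 2000000

/-!
Adjoining `g^{±1}`, `x`, `y`, `u`, `ζ`, `v` one after the other presents `D` as an iterated Ore
extension `R[t; σ, δ]`, with `σ` an automorphism at each stage. An Ore extension of a domain is a
domain, because leading coefficients multiply up to a twist by a power of `σ`, and Hilbert's basis
theorem makes it left noetherian if `R` is; as `σ` is invertible, the coefficients can equally be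
written on the right, which gives the right-hand version.

A `σ`-derivation is the corner entry of a homomorphism to upper triangular matrices, so `σ` and `δ`
only have to be checked against the defining relations of `R`. Freeness of the powers of `t` over
`R` follows from the action of the presented algebra on the polynomials over `R`.
-/

open Polynomial MulOpposite

theorem exists_forall_ge_eq_of_monotone₂ {α : Type*} [PartialOrder α] [WellFoundedGT α]
    (L : ℕ → ℕ → α) (hleft : ∀ n, Monotone fun m => L m n) (hright : ∀ m, Monotone (L m)) :
    ∃ B, ∀ m, B ≤ m → ∀ n, L B n = L m n := by
  obtain ⟨N, hN⟩ := WellFoundedGT.monotone_chain_condition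
    ⟨fun m => L m m, fun a b hab => (hleft a hab).trans (hright b hab)⟩
  replace hN : ∀ m, N ≤ m → L N N = L m m := hN
  choose M hM using fun n => WellFoundedGT.monotone_chain_condition ⟨fun m => L m n, hleft n⟩
  replace hM : ∀ n m, M n ≤ m → L (M n) n = L m n := hM
  have eq_corner {m n : ℕ} (hm : N ≤ m) (hn : N ≤ n) : L m n = L N N := by
    refine le_antisymm ?_ ((hleft N hm).trans (hright m hn))
    rw [hN (max m n) (hm.trans (le_max_left m n))]
    exact (hleft n (le_max_left m n)).trans (hright _ (le_max_right m n))
  refine ⟨max N ((Finset.range N).sup M), fun m hm n => ?_⟩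
  obtain hn | hn := lt_or_ge n N
  · have hMn : M n ≤ max N ((Finset.range N).sup M) :=
      (Finset.le_sup (Finset.mem_range.2 hn)).trans (le_max_right _ _)
    rw [← hM n _ hMn, hM n m (hMn.trans hm)]
  · rw [eq_corner (le_max_left _ _) hn, eq_corner ((le_max_left _ _).trans hm) hn]

/-- The property of being a domain that is both left and right noetherian. -/
structure IsNoetherianDomain (S : Type*) [Ring S] : Prop where
  isDomain : IsDomain S
  isNoetherianRing : IsNoetherianRing S
  isNoetherianRing_op : IsNoetherianRing Sᵐᵒᵖ

theorem IsNoetherianDomain.of_ringEquiv {S T : Type*} [Ring S] [Ring T]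
    (hS : IsNoetherianDomain S) (e : S ≃+* T) : IsNoetherianDomain T where
  isDomain := have := hS.isDomain; e.symm.toMulEquiv.isDomain S
  isNoetherianRing := have := hS.isNoetherianRing; isNoetherianRing_of_ringEquiv S e
  isNoetherianRing_op := have := hS.isNoetherianRing_op
    isNoetherianRing_of_ringEquiv Sᵐᵒᵖ (RingEquiv.op e)

/-! ### Ore extensions -/

theorem eval₂_C_mul_noncomm {R S : Type*} [Semiring R] [Semiring S] (i : R →+* S) (t : S) (a : R)
    (f : R[X]) : (C a * f).eval₂ i t = i a * f.eval₂ i t := by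
  induction f using Polynomial.induction_on' with
  | add f g hf hg => simp only [mul_add, eval₂_add, hf, hg]
  | monomial n b => simp only [C_mul_monomial, eval₂_monomial, map_mul, mul_assoc]

section OreExtension

variable {K R S : Type*} [CommRing K] [Ring R] [Algebra K R] [Ring S] [Algebra K S]

/-- The linear map `δ` is a (left) `σ`-derivation. -/
def IsSkewDerivation (σ : R →ₐ[K] R) (δ : R →ₗ[K] R) : Prop :=
  ∀ a b, δ (a * b) = σ a * δ b + δ a * b

theorem IsSkewDerivation.map_one {σ : R →ₐ[K] R} {δ : R →ₗ[K] R} (hδ : IsSkewDerivation σ δ) :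
    δ 1 = 0 := by
  simpa using hδ 1 1

/-- Left multiplication by the variable in the Ore extension `R[t; σ, δ]`, whose elements
`∑ aₙ tⁿ` are encoded as polynomials `∑ aₙ Xⁿ`. -/
noncomputable def oreShift (σ : R →ₐ[K] R) (δ : R →ₗ[K] R) : Module.End K R[X] :=
  lsum fun n => (monomial (n + 1)).restrictScalars K ∘ₗ σ.toLinearMap +
    (monomial n).restrictScalars K ∘ₗ δ

section oreShift

variable (σ : R →ₐ[K] R) (δ : R →ₗ[K] R)

theorem oreShift_monomial (n : ℕ) (a : R) :
    oreShift σ δ (monomial n a) = monomial (n + 1) (σ a) + monomial n (δ a) := by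
  simp [oreShift, sum_monomial_index]

theorem coeff_oreShift_succ (f : R[X]) (n : ℕ) :
    (oreShift σ δ f).coeff (n + 1) = σ (f.coeff n) + δ (f.coeff (n + 1)) := by
  induction f using Polynomial.induction_on' with
  | add f g hf hg => simp only [map_add, coeff_add, hf, hg]; abel
  | monomial m a =>
    simp only [oreShift_monomial, coeff_add, coeff_monomial, Nat.add_right_cancel_iff]
    split_ifs <;> simp

theorem natDegree_oreShift_le {f : R[X]} {m : ℕ} (hf : f.natDegree ≤ m) :
    (oreShift σ δ f).natDegree ≤ m + 1 := by
  rw [natDegree_le_iff_coeff_eq_zero] at hf ⊢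
  intro N hN
  obtain ⟨N, rfl⟩ := Nat.exists_eq_succ_of_ne_zero (Nat.ne_zero_of_lt hN)
  rw [coeff_oreShift_succ, hf N (by omega), hf (N + 1) (by omega), map_zero, map_zero, add_zero]

theorem coeff_oreShift_of_natDegree_le {f : R[X]} {m : ℕ} (hf : f.natDegree ≤ m) :
    (oreShift σ δ f).coeff (m + 1) = σ (f.coeff m) := by
  rw [coeff_oreShift_succ, coeff_eq_zero_of_natDegree_lt (Nat.lt_succ_of_le hf), map_zero,
    add_zero]

theorem natDegree_oreShift_pow_le (n : ℕ) {f : R[X]} {m : ℕ} (hf : f.natDegree ≤ m) :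
    ((oreShift σ δ ^ n) f).natDegree ≤ n + m := by
  induction n with
  | zero => simpa using hf
  | succ n ih =>
    rw [pow_succ', Module.End.mul_apply, Nat.add_right_comm]
    exact natDegree_oreShift_le σ δ ih

theorem coeff_oreShift_pow_of_natDegree_le (n : ℕ) {f : R[X]} {m : ℕ} (hf : f.natDegree ≤ m) :
    ((oreShift σ δ ^ n) f).coeff (n + m) = σ^[n] (f.coeff m) := by
  induction n with
  | zero => simp
  | succ n ih =>
    rw [pow_succ', Module.End.mul_apply, Nat.add_right_comm,
      coeff_oreShift_of_natDegree_le σ δ (natDegree_oreShift_pow_le σ δ n hf), ih,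
      Function.iterate_succ_apply']

variable {σ δ}

theorem oreShift_pow_one (hδ : IsSkewDerivation σ δ) (n : ℕ) :
    (oreShift σ δ ^ n) 1 = X ^ n := by
  induction n with
  | zero => simp
  | succ n ih =>
    rw [pow_succ', Module.End.mul_apply, ih, X_pow_eq_monomial, oreShift_monomial, map_one,
      hδ.map_one, map_zero, add_zero, X_pow_eq_monomial]

theorem oreShift_C_mul (hδ : IsSkewDerivation σ δ) (a : R) (f : R[X]) :
    oreShift σ δ (C a * f) = C (σ a) * oreShift σ δ f + C (δ a) * f := by
  induction f using Polynomial.induction_on' with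
  | add f g hf hg => simp only [mul_add, map_add, hf, hg]; abel
  | monomial n b =>
    simp only [C_mul_monomial, oreShift_monomial, hδ a b, mul_add, map_mul, map_add]
    abel

end oreShift

/-- The product `(∑ aₙ tⁿ) * g = ∑ aₙ (tⁿ g)` of the Ore extension `R[t; σ, δ]`, transported to
polynomials. -/
noncomputable def oreMul (σ : R →ₐ[K] R) (δ : R →ₗ[K] R) (f g : R[X]) : R[X] :=
  f.sum fun n a => C a * (oreShift σ δ ^ n) g

theorem coeff_oreMul_of_natDegree_le (σ : R →ₐ[K] R) (δ : R →ₗ[K] R) {f g : R[X]} {m n : ℕ}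
    (hf : f.natDegree ≤ n) (hg : g.natDegree ≤ m) :
    (oreMul σ δ f g).coeff (n + m) = f.coeff n * σ^[n] (g.coeff m) := by
  have lower_terms_vanish (j : ℕ) (hj : j < n) :
      (C (f.coeff j) * (oreShift σ δ ^ j) g).coeff (n + m) = 0 := by
    have := natDegree_oreShift_pow_le σ δ j hg
    rw [coeff_C_mul, coeff_eq_zero_of_natDegree_lt (p := (oreShift σ δ ^ j) g) (by omega), mul_zero]
  rw [oreMul, sum_over_range' f (by simp) (n + 1) (by omega), finsetSum_coeff,
    Finset.sum_range_succ, Finset.sum_eq_zero fun j hj => lower_terms_vanish j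
    (Finset.mem_range.1 hj), zero_add, coeff_C_mul, coeff_oreShift_pow_of_natDegree_le σ δ n hg]

/-- The `K`-algebra `S` is generated by the image of `R` and an element `t` subject to the
commutation rule of the Ore extension `R[t; σ, δ]`. The powers of `t` need not be independent
over `R`, so that `S` is a quotient of `R[t; σ, δ]`. -/
structure IsOreGenerated (i : R →ₐ[K] S) (t : S) (σ : R →ₐ[K] R) (δ : R →ₗ[K] R) : Prop where
  mul_map (a : R) : t * i a = i (σ a) * t + i (δ a)
  adjoin_eq_top : Algebra.adjoin K (insert t (Set.range i)) = ⊤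

namespace IsOreGenerated

variable {i : R →ₐ[K] S} {t : S} {σ : R →ₐ[K] R} {δ : R →ₗ[K] R}

theorem mul_eval₂ (h : IsOreGenerated i t σ δ) (f : R[X]) :
    t * f.eval₂ i t = (oreShift σ δ f).eval₂ i t := by
  induction f using Polynomial.induction_on' with
  | add f g hf hg => simp only [map_add, eval₂_add, mul_add, hf, hg]
  | monomial n a =>
    simp only [oreShift_monomial, eval₂_add, eval₂_monomial, RingHom.coe_coe,
      ← mul_assoc, h.mul_map, add_mul, pow_succ']

theorem pow_mul_eval₂ (h : IsOreGenerated i t σ δ) (n : ℕ) (f : R[X]) :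
    t ^ n * f.eval₂ i t = ((oreShift σ δ ^ n) f).eval₂ i t := by
  induction n with
  | zero => simp
  | succ n ih => rw [pow_succ', mul_assoc, ih, h.mul_eval₂, pow_succ', Module.End.mul_apply]

theorem eval₂_oreMul (h : IsOreGenerated i t σ δ) (f g : R[X]) :
    (oreMul σ δ f g).eval₂ i t = f.eval₂ i t * g.eval₂ i t := by
  rw [eval₂_eq_sum (p := f), oreMul, Polynomial.sum, Polynomial.sum, eval₂_finsetSum,
    Finset.sum_mul]
  refine Finset.sum_congr rfl fun n _ => ?_
  rw [eval₂_C_mul_noncomm, mul_assoc, h.pow_mul_eval₂]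

theorem eval₂_surjective (h : IsOreGenerated i t σ δ) :
    Function.Surjective (eval₂ (i : R →+* S) t) := by
  intro s
  have hs : s ∈ Algebra.adjoin K (insert t (Set.range i)) := h.adjoin_eq_top ▸ trivial
  induction hs using Algebra.adjoin_induction with
  | mem s hs =>
    obtain rfl | ⟨a, rfl⟩ := hs
    · exact ⟨X, eval₂_X _ _⟩
    · exact ⟨C a, eval₂_C _ _⟩
  | algebraMap c => exact ⟨C (algebraMap K R c), by simp⟩
  | add a b _ _ ha hb =>
    obtain ⟨⟨f, rfl⟩, g, rfl⟩ := ha, hb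
    exact ⟨f + g, eval₂_add _ _⟩
  | mul a b _ _ ha hb =>
    obtain ⟨⟨f, rfl⟩, g, rfl⟩ := ha, hb
    exact ⟨oreMul σ δ f g, h.eval₂_oreMul f g⟩

theorem isDomain [IsDomain R] (h : IsOreGenerated i t σ δ) (hσ : Function.Injective σ)
    (hinj : Function.Injective (eval₂ (i : R →+* S) t)) : IsDomain S := by
  have eval₂_eq_zero {f : R[X]} : f.eval₂ (i : R →+* S) t = 0 ↔ f = 0 := by
    rw [← eval₂_zero (i : R →+* S) t, hinj.eq_iff]
  have : Nontrivial S := hinj.nontrivial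
  suffices NoZeroDivisors S from NoZeroDivisors.to_isDomain S
  refine ⟨fun {a b} hab => ?_⟩
  obtain ⟨f, rfl⟩ := h.eval₂_surjective a
  obtain ⟨g, rfl⟩ := h.eval₂_surjective b
  rw [← h.eval₂_oreMul, eval₂_eq_zero] at hab
  have leading_coeff : f.leadingCoeff * σ^[f.natDegree] g.leadingCoeff = 0 := by
    rw [leadingCoeff, leadingCoeff, ← coeff_oreMul_of_natDegree_le σ δ le_rfl le_rfl, hab,
      coeff_zero]
  rw [eval₂_eq_zero, eval₂_eq_zero, ← leadingCoeff_eq_zero, ← leadingCoeff_eq_zero (p := g)]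
  refine (mul_eq_zero.1 leading_coeff).imp_right fun hg => ?_
  exact hσ.iterate f.natDegree (by rw [hg, iterate_map_zero])

/-- The left ideal of those `a` for which `σⁿ(a) tⁿ` is the degree `n` term of an element of `I` of
degree at most `n`. Untwisting by `σⁿ` makes the ideal increasing in `n`. -/
def leadingIdeal (i : R →ₐ[K] S) (t : S) (σ : R →ₐ[K] R) (I : Ideal S) (n : ℕ) : Ideal R where
  carrier := {a | ∃ f : R[X], f.natDegree ≤ n ∧ f.coeff n = σ^[n] a ∧ f.eval₂ i t ∈ I}
  zero_mem' := ⟨0, by simp, by simp [iterate_map_zero], by simp⟩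
  add_mem' := by
    rintro a b ⟨f, hf, hfa, hfI⟩ ⟨g, hg, hgb, hgI⟩
    exact ⟨f + g, natDegree_add_le_of_degree_le hf hg,
      by rw [coeff_add, hfa, hgb, iterate_map_add], by rw [eval₂_add]; exact I.add_mem hfI hgI⟩
  smul_mem' := by
    rintro c a ⟨f, hf, hfa, hfI⟩
    exact ⟨C (σ^[n] c) * f, (natDegree_C_mul_le _ _).trans hf,
      by rw [coeff_C_mul, hfa, smul_eq_mul, iterate_map_mul],
      by rw [eval₂_C_mul_noncomm]; exact I.mul_mem_left _ hfI⟩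

theorem leadingIdeal_mono {I J : Ideal S} (hIJ : I ≤ J) (n : ℕ) :
    leadingIdeal i t σ I n ≤ leadingIdeal i t σ J n :=
  fun _ ⟨f, hf, hfa, hfI⟩ => ⟨f, hf, hfa, hIJ hfI⟩

theorem leadingIdeal_le_succ (h : IsOreGenerated i t σ δ) (I : Ideal S) (n : ℕ) :
    leadingIdeal i t σ I n ≤ leadingIdeal i t σ I (n + 1) := by
  rintro a ⟨f, hf, hfa, hfI⟩
  refine ⟨oreShift σ δ f, natDegree_oreShift_le σ δ hf, ?_, ?_⟩
  · rw [coeff_oreShift_of_natDegree_le σ δ hf, hfa, Function.iterate_succ_apply']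
  · rw [← h.mul_eval₂]
    exact I.mul_mem_left t hfI

theorem eq_of_leadingIdeal_eq (h : IsOreGenerated i t σ δ) (hσ : Function.Surjective σ)
    {I J : Ideal S} (hIJ : I ≤ J)
    (hlead : ∀ n, leadingIdeal i t σ I n = leadingIdeal i t σ J n) : I = J := by
  suffices ∀ (n : ℕ) (f : R[X]), f.degree < n → f.eval₂ i t ∈ J → f.eval₂ i t ∈ I by
    refine le_antisymm hIJ fun s hs => ?_
    obtain ⟨f, rfl⟩ := h.eval₂_surjective s
    exact this (f.natDegree + 1) f (degree_lt_iff_coeff_zero f _ |>.2 fun m hm =>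
      coeff_eq_zero_of_natDegree_lt hm) hs
  intro n
  induction n with
  | zero =>
    intro f hf _
    have hf_zero : f = 0 := by simpa using hf
    rw [hf_zero, eval₂_zero]
    exact I.zero_mem
  | succ n ih =>
    intro f hf hfJ
    replace hf : f.natDegree ≤ n := natDegree_le_of_degree_le (Order.le_of_lt_succ hf)
    obtain ⟨a, ha⟩ := hσ.iterate n (f.coeff n)
    have ha_mem : a ∈ leadingIdeal i t σ J n := ⟨f, hf, ha.symm, hfJ⟩
    obtain ⟨g, hg, hga, hgI⟩ := hlead n ▸ ha_mem
    have hsub : (f - g).degree < n := by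
      refine (degree_lt_iff_coeff_zero _ _).2 fun m hm => ?_
      obtain rfl | hnm := hm.eq_or_lt
      · rw [coeff_sub, hga, ha, sub_self]
      · rw [coeff_sub, coeff_eq_zero_of_natDegree_lt (hf.trans_lt hnm),
          coeff_eq_zero_of_natDegree_lt (hg.trans_lt hnm), sub_self]
    have hsub_mem := ih (f - g) hsub (by rw [eval₂_sub]; exact J.sub_mem hfJ (hIJ hgI))
    rw [eval₂_sub] at hsub_mem
    exact (I.sub_mem_iff_left hgI).1 hsub_mem

theorem isNoetherianRing [IsNoetherianRing R] (h : IsOreGenerated i t σ δ)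
    (hσ : Function.Surjective σ) : IsNoetherianRing S := by
  rw [isNoetherianRing_iff, ← monotone_stabilizes_iff_noetherian]
  intro I
  obtain ⟨B, hB⟩ := exists_forall_ge_eq_of_monotone₂ (fun m n => leadingIdeal i t σ (I m) n)
    (fun n _ _ hab => leadingIdeal_mono (I.mono hab) n)
    (fun m => monotone_nat_of_le_succ (h.leadingIdeal_le_succ (I m)))
  exact ⟨B, fun m hm => h.eq_of_leadingIdeal_eq hσ (I.mono hm) (hB m hm)⟩

protected theorem op {σ : R ≃ₐ[K] R} (h : IsOreGenerated i t (σ : R →ₐ[K] R) δ) :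
    IsOreGenerated (AlgHom.op i) (op t) (AlgHom.op (σ.symm : R →ₐ[K] R))
      ((opLinearEquiv K).toLinearMap ∘ₗ (-(δ ∘ₗ σ.symm.toLinearMap)) ∘ₗ
        (opLinearEquiv K).symm.toLinearMap) where
  mul_map a := by
    apply unop_injective
    have mul_map_symm : t * i (σ.symm a.unop) = i a.unop * t + i (δ (σ.symm a.unop)) := by
      simpa using h.mul_map (σ.symm a.unop)
    simp [mul_map_symm]
  adjoin_eq_top := by
    have := congrArg Subalgebra.op h.adjoin_eq_top
    rw [Subalgebra.op_adjoin, Subalgebra.op_top] at this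
    rw [← this]
    congr 1
    ext s
    simp only [Set.mem_insert_iff, Set.mem_range, Set.mem_preimage, ← unop_inj, unop_op,
      AlgHom.op_apply_apply, (op_surjective (α := R)).exists]

theorem isNoetherianRing_op [IsNoetherianRing Rᵐᵒᵖ] {σ : R ≃ₐ[K] R}
    (h : IsOreGenerated i t (σ : R →ₐ[K] R) δ) : IsNoetherianRing Sᵐᵒᵖ :=
  h.op.isNoetherianRing fun a => ⟨op (σ a.unop), by simp⟩

theorem isNoetherianDomain {σ : R ≃ₐ[K] R} (hR : IsNoetherianDomain R)
    (h : IsOreGenerated i t (σ : R →ₐ[K] R) δ)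
    (hinj : Function.Injective (eval₂ (i : R →+* S) t)) : IsNoetherianDomain S where
  isDomain := have := hR.isDomain; h.isDomain σ.injective hinj
  isNoetherianRing := have := hR.isNoetherianRing; h.isNoetherianRing σ.surjective
  isNoetherianRing_op := have := hR.isNoetherianRing_op; h.isNoetherianRing_op

end IsOreGenerated

end OreExtension

/-! ### Algebras given by generators and relations -/

theorem lift_comp {K J A B : Type*} [CommSemiring K] [Semiring A] [Algebra K A] [Semiring B]
    [Algebra K B] (φ : A →ₐ[K] B) (c : J → A) (a : FreeAlgebra K J) :
    lift K (fun j => φ (c j)) a = φ (lift K c a) :=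
  congr($((lift_unique _ (φ.comp (lift K c))).1 (by ext; simp)) a).symm

section Presentation

variable {K : Type*} [CommRing K]

section Generators

variable {J A : Type*} [Semiring A] [Algebra K A] {r : FreeAlgebra K J → FreeAlgebra K J → Prop}

variable (r) in
/-- The image of the `j`-th generator in the algebra with relations `r`. -/
noncomputable def gen (j : J) : RingQuot r :=
  RingQuot.mkAlgHom K r (ι K j)

variable (r) in
/-- The elements `c j` of the algebra `A` satisfy the relations `r`. -/
def Satisfies (c : J → A) : Prop :=
  ∀ ⦃a b⦄, r a b → lift K c a = lift K c b

theorem lift_gen (a : FreeAlgebra K J) : lift K (gen r) a = RingQuot.mkAlgHom K r a :=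
  congr($((lift_unique (gen r) (RingQuot.mkAlgHom K r)).1 rfl) a).symm

theorem gen_satisfies : Satisfies r (gen r) := fun a b hab => by
  rw [lift_gen, lift_gen, RingQuot.mkAlgHom_rel K hab]

/-- The algebra homomorphism determined by elements satisfying the relations. -/
noncomputable def Satisfies.lift {c : J → A} (hc : Satisfies r c) : RingQuot r →ₐ[K] A :=
  RingQuot.liftAlgHom K ⟨FreeAlgebra.lift K c, hc⟩

@[simp]
theorem Satisfies.lift_gen {c : J → A} (hc : Satisfies r c) (j : J) : hc.lift (gen r j) = c j :=
  (RingQuot.liftAlgHom_mkAlgHom_apply K _ _ _).trans (lift_ι_apply _ _)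

@[elab_as_elim]
theorem gen_induction {motive : RingQuot r → Prop}
    (algebraMap : ∀ c : K, motive (algebraMap K (RingQuot r) c))
    (gen : ∀ j, motive (gen r j)) (mul : ∀ a b, motive a → motive b → motive (a * b))
    (add : ∀ a b, motive a → motive b → motive (a + b)) (a : RingQuot r) : motive a := by
  obtain ⟨w, rfl⟩ := RingQuot.mkAlgHom_surjective K r a
  induction w using FreeAlgebra.induction with
  | grade0 c => simpa using algebraMap c
  | grade1 j => exact gen j
  | mul a b ha hb => simpa using mul _ _ ha hb
  | add a b ha hb => simpa using add _ _ ha hb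

theorem algHom_eq_of_gen {φ ψ : RingQuot r →ₐ[K] A} (h : ∀ j, φ (gen r j) = ψ (gen r j)) :
    φ = ψ :=
  RingQuot.ringQuot_ext' _ _ _ (FreeAlgebra.hom_ext (funext h))

/-- Mutually inverse assignments of generators induce an isomorphism of presented algebras. -/
noncomputable def presentedEquiv {J' : Type*} {s : FreeAlgebra K J' → FreeAlgebra K J' → Prop}
    {c : J → RingQuot s} {d : J' → RingQuot r} (hc : Satisfies r c) (hd : Satisfies s d)
    (hdc : ∀ j, hd.lift (c j) = gen r j) (hcd : ∀ j, hc.lift (d j) = gen s j) :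
    RingQuot r ≃ₐ[K] RingQuot s :=
  AlgEquiv.ofAlgHom hc.lift hd.lift (algHom_eq_of_gen fun j => by simp [hcd])
    (algHom_eq_of_gen fun j => by simp [hdc])

theorem mul_map_of_mul_map_gen {σ : RingQuot r →ₐ[K] RingQuot r}
    {δ : RingQuot r →ₗ[K] RingQuot r} (hδ : IsSkewDerivation σ δ) {ψ : RingQuot r →ₐ[K] A} {t : A}
    (h : ∀ j, t * ψ (gen r j) = ψ (σ (gen r j)) * t + ψ (δ (gen r j))) (a : RingQuot r) :
    t * ψ a = ψ (σ a) * t + ψ (δ a) := by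
  induction a using gen_induction with
  | algebraMap c =>
    have hδc : δ (algebraMap K _ c) = 0 := by
      rw [Algebra.algebraMap_eq_smul_one, map_smul, hδ.map_one, smul_zero]
    rw [hδc, map_zero, add_zero, σ.commutes, ψ.commutes, Algebra.commutes]
  | gen j => exact h j
  | mul a b ha hb =>
    rw [map_mul, ← mul_assoc, ha, add_mul, mul_assoc, hb, hδ]
    simp only [map_mul, map_add, mul_add, mul_assoc, add_assoc]
  | add a b ha hb =>
    simp only [map_add, mul_add, add_mul, ha, hb]
    abel

/-- `δ` is a `σ`-derivation exactly if `a ↦ (σ a, δ a; 0, a)` is multiplicative, so that it can be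
defined on the generators. -/
theorem exists_isSkewDerivation {σ : RingQuot r →ₐ[K] RingQuot r} {q : J → RingQuot r}
    (h : Satisfies r fun j => !![σ (gen r j), q j; 0, gen r j]) :
    ∃ δ : RingQuot r →ₗ[K] RingQuot r, IsSkewDerivation σ δ ∧ ∀ j, δ (gen r j) = q j := by
  have lift_eq (a : RingQuot r) : h.lift a = !![σ a, h.lift a 0 1; 0, a] := by
    induction a using gen_induction with
    | algebraMap c => ext i j; fin_cases i <;> fin_cases j <;> simp [Matrix.algebraMap_matrix_apply]
    | gen j => simp
    | mul a b ha hb =>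
      rw [map_mul, ha, hb]
      simp
    | add a b ha hb =>
      rw [map_add, ha, hb]
      simp
  refine ⟨Matrix.entryLinearMap K _ 0 1 ∘ₗ h.lift.toLinearMap, fun a b => ?_, fun j => by simp⟩
  have lift_mul : h.lift (a * b) =
      !![σ a, h.lift a 0 1; 0, a] * !![σ b, h.lift b 0 1; 0, b] := by
    rw [map_mul, ← lift_eq, ← lift_eq]
  simpa [Matrix.mul_fin_two] using congr($lift_mul 0 1)

end Generators

section OreRel

variable {n : ℕ} {A : Type*} [Semiring A] [Algebra K A]
  {r : FreeAlgebra K (Fin n) → FreeAlgebra K (Fin n) → Prop} {p q : Fin n → FreeAlgebra K (Fin n)}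

variable (r p q) in
/-- The relations obtained from `r` by adjoining a last generator `t` and the relations
`t * j = p j * t + q j` for the old generators `j`. -/
inductive OreRel : FreeAlgebra K (Fin (n + 1)) → FreeAlgebra K (Fin (n + 1)) → Prop
  | base {a b : FreeAlgebra K (Fin n)} (h : r a b) :
    OreRel (lift K (fun j => ι K j.castSucc) a) (lift K (fun j => ι K j.castSucc) b)
  | comm (j : Fin n) :
    OreRel (ι K (Fin.last n) * ι K j.castSucc)
      (lift K (fun j => ι K j.castSucc) (p j) * ι K (Fin.last n) +
        lift K (fun j => ι K j.castSucc) (q j))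

theorem satisfies_oreRel_iff {e : Fin (n + 1) → A} :
    Satisfies (OreRel r p q) e ↔ Satisfies r (fun j => e j.castSucc) ∧
      ∀ j : Fin n, e (Fin.last n) * e j.castSucc =
        lift K (fun j => e j.castSucc) (p j) * e (Fin.last n) +
          lift K (fun j => e j.castSucc) (q j) := by
  have lift_lift (a : FreeAlgebra K (Fin n)) :
      lift K e (lift K (fun j => ι K j.castSucc) a) = lift K (fun j => e j.castSucc) a := by
    rw [← lift_comp]
    simp only [lift_ι_apply]
  refine ⟨fun h => ⟨fun a b hab => ?_, fun j => ?_⟩, ?_⟩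
  · simpa only [lift_lift] using h (.base hab)
  · simpa only [map_mul, map_add, lift_ι_apply, lift_lift] using h (.comm j)
  · rintro ⟨hr, hcomm⟩ _ _ (hab | j)
    · simpa only [lift_lift] using hr hab
    · simpa only [map_mul, map_add, lift_ι_apply, lift_lift] using hcomm j

variable (r p q) in
/-- The canonical homomorphism from the algebra with relations `r` to its Ore extension. -/
noncomputable def oreInclusion : RingQuot r →ₐ[K] RingQuot (OreRel r p q) :=
  (satisfies_oreRel_iff.1 gen_satisfies).1.lift

theorem oreInclusion_gen (j : Fin n) :
    oreInclusion r p q (gen r j) = gen (OreRel r p q) j.castSucc :=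
  Satisfies.lift_gen _ j

theorem isOreGenerated_oreRel {σ : RingQuot r →ₐ[K] RingQuot r} {δ : RingQuot r →ₗ[K] RingQuot r}
    (hδ : IsSkewDerivation σ δ) (hσp : ∀ j, σ (gen r j) = lift K (gen r) (p j))
    (hδq : ∀ j, δ (gen r j) = lift K (gen r) (q j)) :
    IsOreGenerated (oreInclusion r p q) (gen (OreRel r p q) (Fin.last n)) σ δ where
  mul_map := mul_map_of_mul_map_gen hδ fun j => by
    rw [hσp, hδq, ← lift_comp, ← lift_comp]
    simpa only [oreInclusion_gen] using (satisfies_oreRel_iff.1 gen_satisfies).2 j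
  adjoin_eq_top := by
    refine Algebra.eq_top_iff.2 fun a => ?_
    induction a using gen_induction with
    | algebraMap c => exact Subalgebra.algebraMap_mem _ c
    | gen j =>
      refine Algebra.subset_adjoin ?_
      induction j using Fin.lastCases with
      | last => exact Set.mem_insert _ _
      | cast j => exact Set.mem_insert_of_mem _ ⟨gen r j, oreInclusion_gen j⟩
    | mul a b ha hb => exact mul_mem ha hb
    | add a b ha hb => exact add_mem ha hb

/-- The representation of the Ore extension on polynomials, with the base acting by left
multiplication and `t` by `oreShift`, recovers `f` as `f(t) • 1`. -/
theorem eval₂_oreRel_injective {σ : RingQuot r →ₐ[K] RingQuot r}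
    {δ : RingQuot r →ₗ[K] RingQuot r} (hδ : IsSkewDerivation σ δ)
    (hσp : ∀ j, σ (gen r j) = lift K (gen r) (p j))
    (hδq : ∀ j, δ (gen r j) = lift K (gen r) (q j)) :
    Function.Injective (eval₂ (oreInclusion r p q : RingQuot r →+* RingQuot (OreRel r p q))
      (gen (OreRel r p q) (Fin.last n))) := by
  let mulC : RingQuot r →ₐ[K] Module.End K (RingQuot r)[X] :=
    (Algebra.lmul K (RingQuot r)[X]).comp CAlgHom
  have mulC_gen (a : FreeAlgebra K (Fin n)) :
      lift K (fun j => mulC (gen r j)) a = mulC (lift K (gen r) a) := lift_comp _ _ _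
  have hrep : Satisfies (OreRel r p q)
      (Fin.snoc (α := fun _ => Module.End K (RingQuot r)[X])
        (fun j => mulC (gen r j)) (oreShift σ δ)) := by
    simp only [satisfies_oreRel_iff, Fin.snoc_castSucc, Fin.snoc_last, mulC_gen, ← hσp, ← hδq]
    refine ⟨fun a b hab => by rw [mulC_gen, mulC_gen, gen_satisfies hab], fun j => ?_⟩
    exact LinearMap.ext fun f => oreShift_C_mul hδ (gen r j) f
  have rep_base : hrep.lift.comp (oreInclusion r p q) = mulC :=
    algHom_eq_of_gen fun j => by simp [oreInclusion_gen]
  have rep_eval₂ (f : (RingQuot r)[X]) :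
      hrep.lift (f.eval₂ (oreInclusion r p q : RingQuot r →+* _)
        (gen (OreRel r p q) (Fin.last n))) 1 = f := by
    induction f using Polynomial.induction_on' with
    | add f g hf hg => rw [eval₂_add, map_add, LinearMap.add_apply, hf, hg]
    | monomial m a =>
      have rep_base_apply := congr($rep_base a)
      rw [AlgHom.comp_apply] at rep_base_apply
      rw [eval₂_monomial, RingHom.coe_coe, map_mul, map_pow, rep_base_apply, Satisfies.lift_gen,
        Fin.snoc_last, Module.End.mul_apply, oreShift_pow_one hδ]
      exact C_mul_X_pow_eq_monomial
  exact Function.LeftInverse.injective (g := fun s => hrep.lift s 1) rep_eval₂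

theorem isNoetherianDomain_oreRel (hr : IsNoetherianDomain (RingQuot r))
    (σ : RingQuot r ≃ₐ[K] RingQuot r) (hσ : ∀ j, σ (gen r j) = lift K (gen r) (p j))
    (hpq : Satisfies r fun j => !![lift K (gen r) (p j), lift K (gen r) (q j); 0, gen r j]) :
    IsNoetherianDomain (RingQuot (OreRel r p q)) := by
  simp only [← hσ] at hpq
  obtain ⟨δ, hδ, hδq⟩ := exists_isSkewDerivation (σ := σ.toAlgHom) hpq
  exact (isOreGenerated_oreRel hδ hσ hδq).isNoetherianDomain hr (eval₂_oreRel_injective hδ hσ hδq)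

theorem isNoetherianDomain_oreRel_of_derivation (hr : IsNoetherianDomain (RingQuot r))
    (hq : Satisfies r fun j => !![gen r j, lift K (gen r) (q j); 0, gen r j]) :
    IsNoetherianDomain (RingQuot (OreRel r (ι K) q)) :=
  isNoetherianDomain_oreRel hr .refl (fun j => by simp) (by simpa only [lift_ι_apply] using hq)

end OreRel

end Presentation

/-! ### Identities in noncommutative rings -/

theorem mul_mul_eq_of_mul_eq {S : Type*} [Semigroup S] {a b d : S} (h : a * b = d) (e : S) :
    a * (b * e) = d * e := by
  rw [← mul_assoc, h]

theorem mul_inv_eq_of_mul_eq_add {A : Type*} [Ring A] {g g' t d : A} (hgg' : g * g' = 1)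
    (hg'g : g' * g = 1) (h : t * g = g * t + d) : t * g' = g' * t - g' * d * g' := by
  have hd : d = t * g - g * t := eq_sub_of_add_eq' h.symm
  rw [hd, mul_sub, sub_mul, ← mul_assoc g' g t, hg'g, one_mul, mul_assoc, mul_assoc t, hgg',
    mul_one, sub_sub_cancel]

section UpperTriangular

variable {A : Type*}

theorem upperTriangular_mul [NonUnitalNonAssocSemiring A] (a b d a' b' d' : A) :
    !![a, b; 0, d] * !![a', b'; 0, d'] = !![a * a', a * b' + b * d'; 0, d * d'] := by
  simp

theorem upperTriangular_add [AddZeroClass A] (a b d a' b' d' : A) :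
    !![a, b; 0, d] + !![a', b'; 0, d'] = !![a + a', b + b'; 0, d + d'] := by
  simp

theorem upperTriangular_sub [SubNegZeroMonoid A] (a b d a' b' d' : A) :
    !![a, b; 0, d] - !![a', b'; 0, d'] = !![a - a', b - b'; 0, d - d'] := by
  simp

theorem upperTriangular_smul {K : Type*} [Zero A] [SMulZeroClass K A] (c : K) (a b d : A) :
    c • !![a, b; 0, d] = !![c • a, c • b; 0, c • d] := by
  simp

theorem upperTriangular_inj [Zero A] {a b d a' b' d' : A} :
    !![a, b; 0, d] = !![a', b'; 0, d'] ↔ a = a' ∧ b = b' ∧ d = d' := by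
  simp [and_assoc]

end UpperTriangular

/-! ### Laurent polynomials by generators and relations -/

section OreTower

/-- The relations stating that the generators `0` and `1` are inverse to each other. -/
inductive InverseRel (K : Type*) [CommRing K] :
    FreeAlgebra K (Fin 2) → FreeAlgebra K (Fin 2) → Prop
  | mul_inv : InverseRel K (ι K 0 * ι K 1) 1
  | inv_mul : InverseRel K (ι K 1 * ι K 0) 1

variable {K : Type*} [CommRing K]

theorem satisfies_inverseRel_iff {A : Type*} [Semiring A] [Algebra K A] {e : Fin 2 → A} :
    Satisfies (InverseRel K) e ↔ e 0 * e 1 = 1 ∧ e 1 * e 0 = 1 := by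
  refine ⟨fun h => ⟨by simpa using h .mul_inv, by simpa using h .inv_mul⟩, ?_⟩
  rintro ⟨h₁, h₂⟩ _ _ (_ | _)
  · simpa using h₁
  · simpa using h₂

section LaurentPolynomial

open LaurentPolynomial

/-- Evaluation of Laurent polynomials at a unit of a possibly noncommutative algebra. -/
noncomputable def laurentEval {A : Type*} [Semiring A] [Algebra K A] (w : Aˣ) :
    K[T;T⁻¹] →ₐ[K] A :=
  AddMonoidAlgebra.lift K A ℤ ((Units.coeHom A).comp (zpowersHom Aˣ w))

theorem laurentEval_T {A : Type*} [Semiring A] [Algebra K A] (w : Aˣ) (n : ℤ) :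
    laurentEval w (T n : K[T;T⁻¹]) = ↑(w ^ n) :=
  (AddMonoidAlgebra.lift_single _ _ _).trans (by simp)

/-- The Laurent polynomial ring is presented by a generator and its inverse. -/
noncomputable def inverseRelEquivLaurent : RingQuot (InverseRel K) ≃ₐ[K] K[T;T⁻¹] :=
  have hT : Satisfies (InverseRel K) ![(T 1 : K[T;T⁻¹]), T (-1)] :=
    satisfies_inverseRel_iff.2 ⟨(T_add 1 (-1)).symm, (T_add (-1) 1).symm⟩
  have hgen := satisfies_inverseRel_iff.1 (gen_satisfies (r := InverseRel K))
  let w : (RingQuot (InverseRel K))ˣ := ⟨gen _ 0, gen _ 1, hgen.1, hgen.2⟩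
  have map_T_one : hT.lift (laurentEval w (T 1 : K[T;T⁻¹])) = T 1 := by simp [laurentEval_T, w]
  AlgEquiv.ofAlgHom hT.lift (laurentEval w)
    (AddMonoidAlgebra.algHom_ext' (MonoidHom.ext_mint map_T_one) (Subsingleton.elim _ _))
    (algHom_eq_of_gen fun j => by fin_cases j <;> simp [laurentEval_T, w])

end LaurentPolynomial

theorem isNoetherianDomain_inverseRel [IsDomain K] [IsNoetherianRing K] :
    IsNoetherianDomain (RingQuot (InverseRel K)) := by
  have : IsNoetherianRing (LaurentPolynomial K) :=
    IsLocalization.isNoetherianRing (Submonoid.powers (X : K[X])) _ inferInstance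
  refine IsNoetherianDomain.of_ringEquiv ⟨inferInstance, this, ?_⟩
    (inverseRelEquivLaurent (K := K)).symm.toRingEquiv
  exact isNoetherianRing_of_ringEquiv _ (RingEquiv.toOpposite (LaurentPolynomial K))

/-! ### The tower of Ore extensions

The generators `0, 1, 2, 3, 4, 5, 6` stand for `g, g⁻¹, x, y, u, ζ, v`, in this order. -/

variable (K) in
/-- The relations of `K[g, g⁻¹][x]`. -/
abbrev XRel := OreRel (InverseRel K) (ι K) 0

/-- The derivation `[y, ·]` on `g, g⁻¹, x`. -/
noncomputable def yDer (c : K) : Fin 3 → FreeAlgebra K (Fin 3) :=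
  ![-(ι K 2 * ι K 0), ι K 2 * ι K 1, -(c • (ι K 2 * ι K 2))]

/-- The relations of `K[g, g⁻¹][x][y]`, where `c` takes the place of the coefficient `1/2` of the
Jordan plane. -/
abbrev YRel (c : K) := OreRel (XRel K) (ι K) (yDer c)

variable (K) in
/-- The derivation `[u, ·]` on `g, g⁻¹, x, y`. -/
noncomputable def uDer : Fin 4 → FreeAlgebra K (Fin 4) :=
  ![0, 0, 0, 1 - ι K 0]

/-- The relations of `K[g, g⁻¹][x][y][u]`. -/
abbrev URel (c : K) := OreRel (YRel c) (ι K) (uDer K)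

variable (K) in
/-- The derivation `[ζ, ·]` on `g, g⁻¹, x, y, u`. -/
noncomputable def zetaDer : Fin 5 → FreeAlgebra K (Fin 5) :=
  ![0, 0, ι K 2, ι K 3, -ι K 4]

/-- The relations of `K[g, g⁻¹][x][y][u][ζ]`. -/
abbrev ZetaRel (c : K) := OreRel (URel c) (ι K) (zetaDer K)

/-- The automorphism `ζ ↦ ζ + a` fixing `g, g⁻¹, x, y, u`. -/
noncomputable def zetaShift (a : K) : Fin 6 → FreeAlgebra K (Fin 6) :=
  ![ι K 0, ι K 1, ι K 2, ι K 3, ι K 4, ι K 5 + algebraMap K _ a]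

/-- The skew derivation by which `v` acts on `g, g⁻¹, x, y, u, ζ`. -/
noncomputable def vDer (c : K) : Fin 6 → FreeAlgebra K (Fin 6) :=
  ![ι K 0 * ι K 4, -(ι K 4 * ι K 1), 1 - ι K 0 + ι K 2 * ι K 4, -(ι K 0 * ι K 5) + ι K 3 * ι K 4,
    -(c • (ι K 4 * ι K 4)), 0]

/-- The relations of `K[g, g⁻¹][x][y][u][ζ][v]`. -/
abbrev VRel (c : K) := OreRel (ZetaRel c) (zetaShift 1) (vDer c)

section Relations

variable {A : Type*} [Ring A] [Algebra K A] {c : K}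

theorem satisfies_xRel_iff {e : Fin 3 → A} :
    Satisfies (XRel K) e ↔ (e 0 * e 1 = 1 ∧ e 1 * e 0 = 1) ∧
      e 2 * e 0 = e 0 * e 2 ∧ e 2 * e 1 = e 1 * e 2 := by
  simp [satisfies_oreRel_iff, satisfies_inverseRel_iff, Fin.forall_fin_succ]

theorem satisfies_yRel_iff {e : Fin 4 → A} :
    Satisfies (YRel c) e ↔ Satisfies (XRel K) (fun j => e j.castSucc) ∧
      e 3 * e 0 = e 0 * e 3 - e 2 * e 0 ∧ e 3 * e 1 = e 1 * e 3 + e 2 * e 1 ∧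
      e 3 * e 2 = e 2 * e 3 - c • (e 2 * e 2) := by
  rw [satisfies_oreRel_iff]
  simp [yDer, Fin.forall_fin_succ, sub_eq_add_neg]

theorem satisfies_uRel_iff {e : Fin 5 → A} :
    Satisfies (URel c) e ↔ Satisfies (YRel c) (fun j => e j.castSucc) ∧
      e 4 * e 0 = e 0 * e 4 ∧ e 4 * e 1 = e 1 * e 4 ∧ e 4 * e 2 = e 2 * e 4 ∧
      e 4 * e 3 = e 3 * e 4 + (1 - e 0) := by
  rw [satisfies_oreRel_iff]
  simp [uDer, Fin.forall_fin_succ]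

theorem satisfies_zetaRel_iff {e : Fin 6 → A} :
    Satisfies (ZetaRel c) e ↔ Satisfies (URel c) (fun j => e j.castSucc) ∧
      e 5 * e 0 = e 0 * e 5 ∧ e 5 * e 1 = e 1 * e 5 ∧ e 5 * e 2 = e 2 * e 5 + e 2 ∧
      e 5 * e 3 = e 3 * e 5 + e 3 ∧ e 5 * e 4 = e 4 * e 5 - e 4 := by
  rw [satisfies_oreRel_iff]
  simp [zetaDer, Fin.forall_fin_succ, sub_eq_add_neg]

theorem satisfies_vRel_iff {e : Fin 7 → A} :
    Satisfies (VRel c) e ↔ Satisfies (ZetaRel c) (fun j => e j.castSucc) ∧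
      e 6 * e 0 = e 0 * e 6 + e 0 * e 4 ∧ e 6 * e 1 = e 1 * e 6 - e 4 * e 1 ∧
      e 6 * e 2 = e 2 * e 6 + (1 - e 0 + e 2 * e 4) ∧
      e 6 * e 3 = e 3 * e 6 + (-(e 0 * e 5) + e 3 * e 4) ∧
      e 6 * e 4 = e 4 * e 6 - c • (e 4 * e 4) ∧ e 6 * e 5 = (e 5 + 1) * e 6 := by
  rw [satisfies_oreRel_iff]
  simp [zetaShift, vDer, Fin.forall_fin_succ, sub_eq_add_neg]

theorem satisfies_matrix_yDer {e : Fin 3 → A} (h : Satisfies (XRel K) e) :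
    Satisfies (XRel K) fun j => !![e j, lift K e (yDer c j); 0, e j] := by
  rw [satisfies_xRel_iff] at h ⊢
  obtain ⟨⟨gg', g'g⟩, xg, xg'⟩ := h
  simp only [yDer, Matrix.cons_val, map_mul, map_neg, map_smul, lift_ι_apply, Matrix.one_fin_two,
    upperTriangular_mul, upperTriangular_inj, mul_neg, neg_mul, mul_smul_comm, smul_mul_assoc,
    mul_assoc, gg', g'g, xg, xg', mul_mul_eq_of_mul_eq gg', mul_mul_eq_of_mul_eq g'g,
    mul_mul_eq_of_mul_eq xg, mul_mul_eq_of_mul_eq xg', true_and, and_true]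
  refine ⟨⟨?_, ?_⟩, ?_, ?_⟩ <;> module

theorem satisfies_matrix_uDer {e : Fin 4 → A} (h : Satisfies (YRel c) e) :
    Satisfies (YRel c) fun j => !![e j, lift K e (uDer K j); 0, e j] := by
  simp only [satisfies_yRel_iff, satisfies_xRel_iff, Fin.reduceCastSucc] at h ⊢
  simp [uDer, Matrix.one_fin_two, h, sub_mul, mul_sub]

theorem satisfies_matrix_zetaDer {e : Fin 5 → A} (h : Satisfies (URel c) e) :
    Satisfies (URel c) fun j => !![e j, lift K e (zetaDer K j); 0, e j] := by
  simp only [satisfies_uRel_iff, satisfies_yRel_iff, satisfies_xRel_iff,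
    Fin.reduceCastSucc] at h ⊢
  simp only [zetaDer, Matrix.cons_val, map_zero, map_neg, lift_ι_apply, Matrix.one_fin_two,
    upperTriangular_mul, upperTriangular_add, upperTriangular_sub, upperTriangular_smul,
    upperTriangular_inj, mul_neg, neg_mul, mul_zero, zero_mul, h, true_and, and_true]
  refine ⟨⟨⟨⟨?_, ?_⟩, ?_, ?_⟩, ?_, ?_, ?_⟩, ?_, ?_, ?_, ?_⟩ <;> module

theorem satisfies_zetaShift {e : Fin 6 → A} (a : K) (h : Satisfies (ZetaRel c) e) :
    Satisfies (ZetaRel c) fun j => lift K e (zetaShift a j) := by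
  simp only [satisfies_zetaRel_iff, satisfies_uRel_iff, satisfies_yRel_iff, satisfies_xRel_iff,
    Fin.reduceCastSucc] at h ⊢
  simp [zetaShift, h, add_mul, mul_add, Algebra.commutes, add_right_comm, sub_add_eq_add_sub]

theorem satisfies_matrix_vDer (hc : c + c = 1) {e : Fin 6 → A} (h : Satisfies (ZetaRel c) e) :
    Satisfies (ZetaRel c) fun j =>
      !![lift K e (zetaShift 1 j), lift K e (vDer c j); 0, e j] := by
  simp only [satisfies_zetaRel_iff, satisfies_uRel_iff, satisfies_yRel_iff, satisfies_xRel_iff,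
    Fin.reduceCastSucc] at h ⊢
  obtain ⟨⟨⟨⟨⟨gg', g'g⟩, xg, xg'⟩, yg, yg', yx⟩, ug, ug', ux, uy⟩, zg, zg', zx, zy, zu⟩ := h
  simp only [zetaShift, vDer, Matrix.cons_val, map_mul, map_add, map_sub, map_neg, map_one,
    map_zero, map_smul, lift_ι_apply, Matrix.one_fin_two, upperTriangular_mul,
    upperTriangular_add, upperTriangular_sub, upperTriangular_smul, upperTriangular_inj, mul_add,
    add_mul, mul_sub, sub_mul, mul_neg, neg_mul, mul_zero, zero_mul, mul_one, one_mul,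
    mul_smul_comm, smul_mul_assoc, mul_assoc, gg', g'g, xg, xg', yg, yg', yx, ug, ug', ux, uy, zg,
    zg', zx, zy, zu, mul_mul_eq_of_mul_eq gg', mul_mul_eq_of_mul_eq g'g, mul_mul_eq_of_mul_eq xg,
    mul_mul_eq_of_mul_eq xg', mul_mul_eq_of_mul_eq yg, mul_mul_eq_of_mul_eq yg',
    mul_mul_eq_of_mul_eq yx, mul_mul_eq_of_mul_eq ug, mul_mul_eq_of_mul_eq ug',
    mul_mul_eq_of_mul_eq ux, mul_mul_eq_of_mul_eq uy, mul_mul_eq_of_mul_eq zg,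
    mul_mul_eq_of_mul_eq zg', mul_mul_eq_of_mul_eq zx, mul_mul_eq_of_mul_eq zy,
    mul_mul_eq_of_mul_eq zu, true_and, and_true]
  refine ⟨⟨⟨⟨⟨?_, ?_⟩, ?_, ?_⟩, ?_, ?_, ?yx⟩, ?_, ?_, ?_, ?uy⟩, ?_, ?_, ?_, ?_, ?_, ?_⟩
  case yx => linear_combination (norm := module) hc • (e 2 - e 0 * e 2)
  case uy => linear_combination (norm := module) hc • (e 0 * e 4 - e 4)
  all_goals module

end Relations

variable [IsDomain K] [IsNoetherianRing K]

theorem isNoetherianDomain_xRel : IsNoetherianDomain (RingQuot (XRel K)) := by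
  refine isNoetherianDomain_oreRel_of_derivation isNoetherianDomain_inverseRel ?_
  have h := gen_satisfies (r := InverseRel K)
  rw [satisfies_inverseRel_iff] at h ⊢
  simp [h, Matrix.one_fin_two]

theorem isNoetherianDomain_zetaRel (c : K) : IsNoetherianDomain (RingQuot (ZetaRel c)) := by
  have hY : IsNoetherianDomain (RingQuot (YRel c)) :=
    isNoetherianDomain_oreRel_of_derivation isNoetherianDomain_xRel
      (satisfies_matrix_yDer gen_satisfies)
  have hU : IsNoetherianDomain (RingQuot (URel c)) :=
    isNoetherianDomain_oreRel_of_derivation hY (satisfies_matrix_uDer gen_satisfies)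
  exact isNoetherianDomain_oreRel_of_derivation hU (satisfies_matrix_zetaDer gen_satisfies)

theorem isNoetherianDomain_vRel {c : K} (hc : c + c = 1) :
    IsNoetherianDomain (RingQuot (VRel c)) := by
  let σ : RingQuot (ZetaRel c) ≃ₐ[K] RingQuot (ZetaRel c) :=
    presentedEquiv (satisfies_zetaShift 1 gen_satisfies) (satisfies_zetaShift (-1) gen_satisfies)
      (fun j => by fin_cases j <;> simp [zetaShift])
      (fun j => by fin_cases j <;> simp [zetaShift])
  exact isNoetherianDomain_oreRel (isNoetherianDomain_zetaRel c) σ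
    (fun j => Satisfies.lift_gen _ j) (satisfies_matrix_vDer hc gen_satisfies)

end OreTower

/-- The generators of the double of the Jordan plane in the order in which they are adjoined. -/
def jordanGen : Fin 7 → JGen :=
  ![.g, .ginv, .x, .y, .u, .zeta, .v]

/-- The position of a generator of the double of the Jordan plane in the tower. -/
def jordanIndex : JGen → Fin 7
  | .g => 0
  | .ginv => 1
  | .x => 2
  | .y => 3
  | .u => 4
  | .zeta => 5
  | .v => 6

section JordanDouble

variable {K : Type} [Field K] {A : Type*} [Ring A] [Algebra K A]

theorem satisfies_vRel_of_jRel {e : JGen → A} (h : Satisfies (JRel K) e) :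
    Satisfies (VRel (1 / 2 : K)) (e ∘ jordanGen) := by
  have gg' := h .gginv; have g'g := h .ginvg; have zg := h .zg; have gx := h .gx
  have gy := h .gy; have zy := h .zy; have zx := h .zx; have ug := h .ug; have vg := h .vg
  have vz := h .vz; have uz := h .uz; have yx := h .yx; have vu := h .vu; have ux := h .ux
  have vx := h .vx; have uy := h .uy; have vy := h .vy
  simp only [map_mul, map_add, map_sub, map_one, map_smul, lift_ι_apply] at *
  have yg : e .y * e .g = e .g * e .y - e .x * e .g := by rw [gy]; abel
  have xg' : e .x * e .ginv = e .ginv * e .x := by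
    simpa using mul_inv_eq_of_mul_eq_add (d := 0) gg' g'g (by rw [gx, add_zero])
  have ug' : e .u * e .ginv = e .ginv * e .u := by
    simpa using mul_inv_eq_of_mul_eq_add (d := 0) gg' g'g (by rw [ug, add_zero])
  have zg' : e .zeta * e .ginv = e .ginv * e .zeta := by
    simpa using mul_inv_eq_of_mul_eq_add (d := 0) gg' g'g (by rw [zg, add_zero])
  have yg' : e .y * e .ginv = e .ginv * e .y + e .x * e .ginv := by
    simpa [← gx, ← mul_assoc, g'g] using
      mul_inv_eq_of_mul_eq_add gg' g'g (yg.trans (sub_eq_add_neg _ _))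
  have vg' : e .v * e .ginv = e .ginv * e .v - e .u * e .ginv := by
    simpa [← mul_assoc, g'g] using mul_inv_eq_of_mul_eq_add gg' g'g vg
  simp only [satisfies_vRel_iff, satisfies_zetaRel_iff, satisfies_uRel_iff, satisfies_yRel_iff,
    satisfies_xRel_iff, Fin.reduceCastSucc, Function.comp_apply, jordanGen, Matrix.cons_val]
  refine ⟨⟨⟨⟨⟨⟨gg', g'g⟩, gx.symm, xg'⟩, yg, yg', yx⟩, ug, ug', ux, uy⟩, zg, zg', zx, zy, ?_⟩,
    vg, vg', ?_, ?_, vu, ?_⟩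
  · rw [uz]; abel
  · rw [vx]; abel
  · rw [vy]; abel
  · rw [vz, add_mul, one_mul]

theorem satisfies_jRel_of_vRel {e : Fin 7 → A} (h : Satisfies (VRel (1 / 2 : K)) e) :
    Satisfies (JRel K) (e ∘ jordanIndex) := by
  simp only [satisfies_vRel_iff, satisfies_zetaRel_iff, satisfies_uRel_iff, satisfies_yRel_iff,
    satisfies_xRel_iff, Fin.reduceCastSucc] at h
  intro a b hab
  cases hab <;>
    simp only [map_mul, map_add, map_sub, map_smul, map_one, lift_ι_apply, Function.comp_apply,
      jordanIndex, h, add_mul, one_mul] <;>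
    abel

end JordanDouble

/-- The double of the Jordan plane is the iterated Ore extension with relations `VRel (1 / 2)`. -/
noncomputable def vRelEquivD (K : Type) [Field K] : RingQuot (VRel (1 / 2 : K)) ≃ₐ[K] D K :=
  presentedEquiv (satisfies_vRel_of_jRel gen_satisfies) (satisfies_jRel_of_vRel gen_satisfies)
    (fun j => by fin_cases j <;> simp [jordanGen, jordanIndex])
    (fun j => by cases j <;> simp [jordanGen, jordanIndex])

theorem D_domain_noetherian_general (K : Type) [Field K] (h2 : (2 : K) ≠ 0) :
    IsDomain (D K) ∧ IsNoetherianRing (D K) ∧ IsNoetherianRing (D K)ᵐᵒᵖ := by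
  have : NeZero (2 : K) := ⟨h2⟩
  obtain ⟨hdomain, hleft, hright⟩ :=
    (isNoetherianDomain_vRel (add_halves (1 : K))).of_ringEquiv (vRelEquivD K).toRingEquiv
  exact ⟨hdomain, hleft, hright⟩

/-- `D` is a domain and is left and right noetherian. -/
theorem D_domain_noetherian :
    IsDomain (D k) ∧ IsNoetherianRing (D k) ∧ IsNoetherianRing (D k)ᵐᵒᵖ := by
  exact D_domain_noetherian_general k two_ne_zero
end
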